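/- Let P ⊆ ℝ³ be a 3-dimensional reflexive polytope with respect to ℤ³. Then the lattice points of ℤ³ lying on the edges and vertices of P (the 1-skeleton of P) generate the full lattice ℤ³, i.e., Λ_1 = ℤ³. -/

import Mathlib

/-!
Let `U` be a finite set of integral normals with `P = {x | ∀ u ∈ U, ⟨u, x⟩ ≥ -1}`, which exists
since the dual of `P` is a lattice polytope, and let `Λ` be the lattice generated by the lattice
points of the `1`-skeleton. The proof has two halves.

**All the lattice points of `P` lie in `Λ`** (`latPts_subset`). A lattice point of `P` at which two
inequalities are tight lies on an edge, and one at which none is tight is the origin; hence a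
lattice point `x ∉ Λ` of `P` is a *root* (`RootAt`): exactly one `η ∈ U` is tight at `x` and all the
others are nonnegative there. Therefore `x` can be added to a point of `P` as often as `η` allows
(`RootAt.add_smul_mem`). Take a vertex `w` with `⟨η, w⟩ > 0`. Then `w + x ∉ Λ` is a root at
some `μ ≠ η` with `⟨μ, x⟩ = 0`, so moving from `w` along `x` ends at a point `y` of the edge
`η = μ = -1`, and `z = y - x` is a second root outside `Λ`. The vectors `x`, `z`, `t = η × μ` form a
basis of `ℤ³`, in which `P` lies in the region where the first two coordinates are at most `1`. The
ends of the edge are vertices of `P`, and this prevents `P` from having any lattice point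
`(-1, 0, s)` or `(0, -1, s)` (`neg_add_notMem`). On the other hand, the origin is interior to `P`,
and pushing vertices by the roots `x` and `z` produces such a lattice point; the only
delicate case is settled by the remark that `2x` and `3x` cannot both be in `Λ`
(`exists_neg_add_mem`).

**The lattice points of `P` generate `ℤ³`** (`mem_of_latPts_subset`). By Carathéodory, every
`m ∈ ℤ³` is a nonnegative combination of at most three vertices of one facet. Removing the integral
parts of the coefficients leaves a lattice point of the half-open parallelepiped, of height `0`, `1`
or `2` over the facet. Height `0` means the origin, height `1` a lattice point of the facet,
and height `2` is reduced to height `1` by the central symmetry of the parallelepiped.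
-/

/-- The standard pairing `⟨x, y⟩ = ∑ i, x i * y i` on `ℝ^n`. -/
def dotProd {n : ℕ} (x y : Fin n → ℝ) : ℝ := ∑ i, x i * y i

/-- A point of `ℝ^n` is a lattice point if all its coordinates are integers. -/
def IsLatticePt {n : ℕ} (x : Fin n → ℝ) : Prop := ∀ i, ∃ m : ℤ, x i = (m : ℝ)

/-- A lattice polytope is the convex hull of finitely many lattice points. -/
def IsLatticePolytope {n : ℕ} (P : Set (Fin n → ℝ)) : Prop :=
  ∃ V : Set (Fin n → ℝ), V.Finite ∧ (∀ x ∈ V, IsLatticePt x) ∧ P = convexHull ℝ V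

/-- The dual polytope `P* = {y : ⟨x, y⟩ ≥ -1 for all x ∈ P}`. -/
def dualPolytope {n : ℕ} (P : Set (Fin n → ℝ)) : Set (Fin n → ℝ) :=
  {y | ∀ x ∈ P, -1 ≤ dotProd x y}

/-- A reflexive polytope: a lattice polytope containing `0` in its interior
(hence full-dimensional) whose dual is again a lattice polytope. -/
def IsReflexive {n : ℕ} (P : Set (Fin n → ℝ)) : Prop :=
  IsLatticePolytope P ∧ (0 : Fin n → ℝ) ∈ interior P ∧ IsLatticePolytope (dualPolytope P)

/-- A face of a polytope (an exposed face). -/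
def IsFaceOf {n : ℕ} (P F : Set (Fin n → ℝ)) : Prop := IsExposed ℝ P F

/-- A facet: a nonempty face of dimension `n - 1`. -/
def IsFacetOf {n : ℕ} (P F : Set (Fin n → ℝ)) : Prop :=
  IsFaceOf P F ∧ F.Nonempty ∧ Module.finrank ℝ ↥(vectorSpan ℝ F) = n - 1

/-- `Λ_k` : the subgroup of `ℝ^n` generated by all lattice points lying in faces of `P`
of dimension at most `k` (the `k`-skeleton).  It is a subgroup of the lattice `ℤ^n`. -/
def skeletonLattice {n : ℕ} (P : Set (Fin n → ℝ)) (k : ℕ) : AddSubgroup (Fin n → ℝ) :=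
  AddSubgroup.closure
    {x | IsLatticePt x ∧
      ∃ F : Set (Fin n → ℝ), IsFaceOf P F ∧ Module.finrank ℝ ↥(vectorSpan ℝ F) ≤ k ∧ x ∈ F}

/-- The lattice `ℤ^n`, as the subgroup of `ℝ^n` generated by (= consisting of) all
lattice points. -/
def latticeSubgroup (n : ℕ) : AddSubgroup (Fin n → ℝ) :=
  AddSubgroup.closure {x | IsLatticePt x}

/-- `x` is a (Demazure) root of `P` with facet `F` and inner normal `η`:
`x` is a lattice point in the relative interior of the facet `F`, and `η` is the
lattice point with `⟨η, v⟩ = -1` for all `v ∈ F`. -/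
def IsRoot {n : ℕ} (P : Set (Fin n → ℝ)) (x : Fin n → ℝ) (F : Set (Fin n → ℝ))
    (η : Fin n → ℝ) : Prop :=
  IsLatticePt x ∧ IsFacetOf P F ∧ x ∈ intrinsicInterior ℝ F ∧
    IsLatticePt η ∧ ∀ v ∈ F, dotProd η v = -1

/-! ### Roots of a polytope given by integral inequalities -/

/-- The lattice points of the polytope `{x | ∀ u ∈ U, ⟨u, x⟩ ≥ -1}`. -/
def latPts (U : Set (Fin 3 → ℤ)) : Set (Fin 3 → ℤ) := {x | ∀ u ∈ U, -1 ≤ u ⬝ᵥ x}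

/-- `η` is the only inequality of `U` which is tight at `x`, so that all the other ones
are nonnegative at `x` by integrality. -/
def RootAt (U : Set (Fin 3 → ℤ)) (x η : Fin 3 → ℤ) : Prop :=
  η ∈ U ∧ η ⬝ᵥ x = -1 ∧ ∀ u ∈ U, u ≠ η → 0 ≤ u ⬝ᵥ x

/-- A lattice point of the polytope outside `Λ` is a root. -/
lemma exists_rootAt {U : Set (Fin 3 → ℤ)} {Λ : AddSubgroup (Fin 3 → ℤ)}
    (hA : ∀ x ∈ latPts U, ∀ u ∈ U, ∀ u' ∈ U, u ≠ u' → u ⬝ᵥ x = -1 → u' ⬝ᵥ x = -1 → x ∈ Λ)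
    (h0 : ∀ x : Fin 3 → ℤ, (∀ u ∈ U, 0 ≤ u ⬝ᵥ x) → x = 0)
    {x : Fin 3 → ℤ} (hx : x ∈ latPts U) (hxΛ : x ∉ Λ) : ∃ η, RootAt U x η := by
  have h : ∃ η ∈ U, η ⬝ᵥ x < 0 := by
    by_contra! h
    exact hxΛ (h0 x h ▸ Λ.zero_mem)
  obtain ⟨η, hη, hlt⟩ := h
  have h1 : η ⬝ᵥ x = -1 := by have := hx η hη; omega
  refine ⟨η, hη, h1, fun u hu hne => ?_⟩
  by_contra! hlt'
  have h2 : u ⬝ᵥ x = -1 := by have := hx u hu; omega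
  exact hxΛ (hA x hx u hu η hη hne h2 h1)

/-- Adding a root `k` times to a point of the polytope stays inside the polytope, as long as
the inequality of the root is not violated. -/
lemma RootAt.add_smul_mem {U : Set (Fin 3 → ℤ)} {x η p : Fin 3 → ℤ} (hx : RootAt U x η)
    (hp : p ∈ latPts U) {k : ℤ} (hk : 0 ≤ k) (hk' : k ≤ η ⬝ᵥ p + 1) : p + k • x ∈ latPts U := by
  intro u hu
  rw [dotProduct_add, dotProduct_smul, smul_eq_mul]
  by_cases h : u = η
  · subst h
    rw [hx.2.1]; omega
  · have := mul_nonneg hk (hx.2.2 u hu h)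
    have := hp u hu
    omega

lemma RootAt.add_mem {U : Set (Fin 3 → ℤ)} {x η p : Fin 3 → ℤ} (hx : RootAt U x η)
    (hp : p ∈ latPts U) (h : 0 ≤ η ⬝ᵥ p) : p + x ∈ latPts U := by
  have := hx.add_smul_mem hp (k := 1) (by omega) (by omega)
  rwa [one_smul] at this

/-- If `x ∉ Λ` is a root at `η`, and `y` and `y - x` lie in the polytope, where `y` lies on the
boundary of the face of `η`, then `y - x ∉ Λ` is a root as well, and `y` is a relative interior
point of the edge cut out by the two roots. -/
lemma RootAt.sub {U : Set (Fin 3 → ℤ)} {Λ : AddSubgroup (Fin 3 → ℤ)}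
    (hA : ∀ x ∈ latPts U, ∀ u ∈ U, ∀ u' ∈ U, u ≠ u' → u ⬝ᵥ x = -1 → u' ⬝ᵥ x = -1 → x ∈ Λ)
    (h0 : ∀ x : Fin 3 → ℤ, (∀ u ∈ U, 0 ≤ u ⬝ᵥ x) → x = 0)
    {x η y μ : Fin 3 → ℤ} (hx : RootAt U x η) (hxΛ : x ∉ Λ) (hy : y ∈ latPts U)
    (hηy : η ⬝ᵥ y = -1) (hμ : μ ∈ U) (hne : μ ≠ η) (hμy : μ ⬝ᵥ y = -1)
    (hz : y - x ∈ latPts U) :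
    y ∈ Λ ∧ y - x ∉ Λ ∧ RootAt U (y - x) μ ∧ μ ⬝ᵥ x = 0 ∧
      ∀ u ∈ U, u ⬝ᵥ y = -1 → u = η ∨ u = μ := by
  have hyΛ : y ∈ Λ := hA y hy μ hμ η hx.1 hne hμy hηy
  have hzΛ : y - x ∉ Λ := fun h => hxΛ (by simpa using Λ.sub_mem hyΛ h)
  obtain ⟨ν, hν⟩ := exists_rootAt hA h0 hz hzΛ
  have key : ∀ u ∈ U, u ⬝ᵥ y = -1 → u ≠ η → u = ν ∧ u ⬝ᵥ x = 0 := by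
    intro u hu huy hne
    have h1 := hx.2.2 u hu hne
    have h2 := hz u hu
    rw [dotProduct_sub] at h2
    refine ⟨?_, by omega⟩
    by_contra h
    have h3 := hν.2.2 u hu h
    rw [dotProduct_sub] at h3
    omega
  obtain ⟨rfl, h⟩ := key μ hμ hμy hne
  refine ⟨hyΛ, hzΛ, hν, h, fun u hu huy => ?_⟩
  by_cases h' : u = η
  · exact Or.inl h'
  · exact Or.inr (key u hu huy h').1

/-! ### Lattice points opposite to an edge -/

/-- In coordinates with respect to `x, z, t`, the polytope contains no lattice point `(-1, 0, s)`
with `s > 0`. Here `x` and `z` are roots, `x + z` lies on the edge cut out by their inequalities,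
`t` is the direction of this edge, and `(1, 1, T)` is its end in this direction. -/
lemma neg_add_notMem_of_pos {U : Set (Fin 3 → ℤ)} {Λ : AddSubgroup (Fin 3 → ℤ)}
    (hA : ∀ x ∈ latPts U, ∀ u ∈ U, ∀ u' ∈ U, u ≠ u' → u ⬝ᵥ x = -1 → u' ⬝ᵥ x = -1 → x ∈ Λ)
    (h0 : ∀ x : Fin 3 → ℤ, (∀ u ∈ U, 0 ≤ u ⬝ᵥ x) → x = 0)
    {x z t η μ : Fin 3 → ℤ} (hx : RootAt U x η) (hxΛ : x ∉ Λ) (hz : RootAt U z μ)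
    (hηz : η ⬝ᵥ z = 0) (hμx : μ ⬝ᵥ x = 0) (hηt : η ⬝ᵥ t = 0) (hμt : μ ⬝ᵥ t = 0) (htΛ : t ∈ Λ)
    {T : ℤ} (hT : 0 < T) (hv : x + z + T • t ∈ latPts U)
    (hmax : ∀ k : ℤ, x + z + k • t ∈ latPts U → k ≤ T)
    {s : ℤ} (hs : 0 < s) : -x + s • t ∉ latPts U := by
  intro hq
  have hqΛ : -x + s • t ∉ Λ := fun h => hxΛ (by
    simpa using Λ.sub_mem (Λ.zsmul_mem htΛ s) h)
  obtain ⟨ν, hν⟩ := exists_rootAt hA h0 hq hqΛ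
  have hηx := hx.2.1
  have hμz := hz.2.1
  have hνq := hν.2.1
  have hνη : ν ≠ η := by
    rintro rfl
    simp [-zsmul_eq_mul, hηt, hηx] at hνq
  have hνμ : ν ≠ μ := by
    rintro rfl
    simp [-zsmul_eq_mul, hμt, hμx] at hνq
  have hνx := hx.2.2 ν hν.1 hνη
  have hνz := hz.2.2 ν hν.1 hνμ
  -- The top vertex of the edge lies on `ν`, since otherwise the root `-x + s t` could be added.
  have hνv : ν ⬝ᵥ (x + z + T • t) = -1 := by
    by_contra h
    have h1 := hv ν hν.1
    have h2 := hν.add_mem hv (by omega)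
    have h3 := hx.add_mem h2 (by simp [-zsmul_eq_mul, hηt, hηx, hηz])
    have h4 := hmax (T + s) (by convert h3 using 1; module)
    omega
  simp only [dotProduct_add, dotProduct_smul, dotProduct_neg, smul_eq_mul] at hνv hνq
  have ht : ν ⬝ᵥ t < 0 := by
    by_contra! h
    have := mul_nonneg hT.le h
    omega
  have hst : s * ν ⬝ᵥ t = -1 := by
    have : s * ν ⬝ᵥ t < 0 := mul_neg_of_pos_of_neg hs ht
    omega
  have hs1 : s = 1 := by
    have := Int.eq_one_or_neg_one_of_mul_eq_neg_one hst
    omega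
  subst hs1
  have hνx0 : ν ⬝ᵥ x = 0 := by omega
  have hm := hx.add_smul_mem hq (k := 2) (by omega) (by simp [-zsmul_eq_mul, hηt, hηx])
  have hm2 : -x + (1 : ℤ) • t + (2 : ℤ) • x = x + t := by module
  rw [hm2] at hm
  have := hA _ hm ν hν.1 η hx.1 hνη (by rw [dotProduct_add]; omega) (by rw [dotProduct_add]; omega)
  exact hxΛ (by simpa using Λ.sub_mem this htΛ)

/-- In coordinates with respect to `x, z, t`, the polytope contains no lattice point `(-1, 0, s)`.
The ends of the edge through `x + z` are `(1, 1, T)` and `(1, 1, -T')`. By `hfib` and `hfib'`,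
subtracting `x` from an end leaves the polytope. -/
lemma neg_add_notMem {U : Set (Fin 3 → ℤ)} {Λ : AddSubgroup (Fin 3 → ℤ)}
    (hA : ∀ x ∈ latPts U, ∀ u ∈ U, ∀ u' ∈ U, u ≠ u' → u ⬝ᵥ x = -1 → u' ⬝ᵥ x = -1 → x ∈ Λ)
    (h0 : ∀ x : Fin 3 → ℤ, (∀ u ∈ U, 0 ≤ u ⬝ᵥ x) → x = 0)
    {x z t η μ : Fin 3 → ℤ} (hx : RootAt U x η) (hxΛ : x ∉ Λ) (hz : RootAt U z μ)
    (hηz : η ⬝ᵥ z = 0) (hμx : μ ⬝ᵥ x = 0) (hηt : η ⬝ᵥ t = 0) (hμt : μ ⬝ᵥ t = 0) (htΛ : t ∈ Λ)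
    (hedge : ∀ u ∈ U, u ⬝ᵥ (x + z) = -1 → u = η ∨ u = μ)
    {T T' : ℤ} (hT : 0 < T) (hv : x + z + T • t ∈ latPts U)
    (hmax : ∀ k : ℤ, x + z + k • t ∈ latPts U → k ≤ T) (hfib : z + T • t ∉ latPts U)
    (hT' : 0 < T') (hv' : x + z + T' • (-t) ∈ latPts U)
    (hmax' : ∀ k : ℤ, x + z + k • (-t) ∈ latPts U → k ≤ T') (hfib' : z + T' • (-t) ∉ latPts U)
    (s : ℤ) : -x + s • t ∉ latPts U := by
  rcases lt_trichotomy s 0 with hs | rfl | hs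
  · have := neg_add_notMem_of_pos hA h0 hx hxΛ hz hηz hμx (t := -t) (by simpa) (by simpa)
      (by simpa) hT' hv' hmax' (s := -s) (by omega)
    simpa using this
  · intro hq
    rw [zero_smul, add_zero] at hq
    obtain ⟨ν, hν⟩ := exists_rootAt hA h0 hq (by simpa using hxΛ)
    have hνx := hν.2.1
    have hηx := hx.2.1
    rw [dotProduct_neg] at hνx
    -- Both ends of the edge, hence the whole edge, lie on `ν`.
    have key : ∀ w, w ∈ latPts U → w + -x ∉ latPts U → ν ⬝ᵥ w = -1 := by
      intro w hw hw'
      by_contra h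
      have h1 := hw ν hν.1
      exact hw' (hν.add_mem hw (by omega))
    have e1 := key _ hv (fun h => hfib (by convert h using 1; module))
    have e2 := key _ hv' (fun h => hfib' (by convert h using 1; module))
    simp only [dotProduct_add, dotProduct_smul, dotProduct_neg, smul_eq_mul] at e1 e2
    have e3 : ν ⬝ᵥ (x + z) = -1 := by
      rw [dotProduct_add]
      nlinarith
    rcases hedge ν hν.1 e3 with rfl | rfl <;> omega
  · exact neg_add_notMem_of_pos hA h0 hx hxΛ hz hηz hμx hηt hμt htΛ hT hv hmax hs

/-- In the coordinates given by the basis `x, z, t`, the polytope has a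
lattice point `(-1, 0, s)` or `(0, -1, s)`. -/
lemma exists_neg_add_mem {U : Set (Fin 3 → ℤ)} {Λ : AddSubgroup (Fin 3 → ℤ)}
    (hA : ∀ x ∈ latPts U, ∀ u ∈ U, ∀ u' ∈ U, u ≠ u' → u ⬝ᵥ x = -1 → u' ⬝ᵥ x = -1 → x ∈ Λ)
    (h0 : ∀ x : Fin 3 → ℤ, (∀ u ∈ U, 0 ≤ u ⬝ᵥ x) → x = 0)
    (hint : ∀ g d : Fin 3 → ℤ, 0 < g ⬝ᵥ d → ∃ w ∈ latPts U, w ∈ Λ ∧ 0 < g ⬝ᵥ w)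
    {x z t η μ : Fin 3 → ℤ} (hx : RootAt U x η) (hxΛ : x ∉ Λ) (hz : RootAt U z μ)
    (hyΛ : x + z ∈ Λ)
    (hηz : η ⬝ᵥ z = 0) (hμx : μ ⬝ᵥ x = 0) (hηt : η ⬝ᵥ t = 0) (hμt : μ ⬝ᵥ t = 0) (htΛ : t ∈ Λ)
    (hdec : ∀ p : Fin 3 → ℤ, ∃ k : ℤ, p = (-(η ⬝ᵥ p)) • x + (-(μ ⬝ᵥ p)) • z + k • t) :
    (∃ s : ℤ, -x + s • t ∈ latPts U) ∨ ∃ s : ℤ, -z + s • t ∈ latPts U := by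
  by_contra! hcon
  obtain ⟨hcx, hcz⟩ := hcon
  have hηx := hx.2.1
  have hμz := hz.2.1
  have move : ∀ p ∈ latPts U, ∀ a b : ℤ, a ≤ 1 → b ≤ 1 → -(η ⬝ᵥ p) ≤ a → -(μ ⬝ᵥ p) ≤ b →
      ∃ k : ℤ, a • x + b • z + k • t ∈ latPts U := by
    intro p hp a b ha hb hpa hpb
    obtain ⟨k, hk⟩ := hdec p
    refine ⟨k, ?_⟩
    have h1 := hx.add_smul_mem hp (k := a + η ⬝ᵥ p) (by omega) (by omega)
    have h2 := hz.add_smul_mem h1 (k := b + μ ⬝ᵥ p) (by omega)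
      (by rw [dotProduct_add, dotProduct_smul, hμx, smul_zero]; omega)
    convert h2 using 1
    generalize η ⬝ᵥ p = A at *
    generalize μ ⬝ᵥ p = B at *
    rw [hk]; module
  have hcx' : ∀ s : ℤ, (-1 : ℤ) • x + (0 : ℤ) • z + s • t ∉ latPts U := by simpa using hcx
  have hcz' : ∀ s : ℤ, (0 : ℤ) • x + (-1 : ℤ) • z + s • t ∉ latPts U := by simpa using hcz
  have hxz : ∀ k : ℤ, (-1 : ℤ) • x + (1 : ℤ) • z + k • t ∈ Λ → (2 : ℤ) • x ∈ Λ := by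
    intro k hk
    convert Λ.sub_mem (Λ.add_mem hyΛ (Λ.zsmul_mem htΛ k)) hk using 1
    module
  have hxz' : ∀ k : ℤ, (1 : ℤ) • x + (-1 : ℤ) • z + k • t ∈ Λ → (2 : ℤ) • x ∈ Λ := by
    intro k hk
    convert Λ.add_mem (Λ.sub_mem hyΛ (Λ.zsmul_mem htΛ k)) hk using 1
    module
  have hxzz : ∀ k : ℤ, (1 : ℤ) • x + (-2 : ℤ) • z + k • t ∈ Λ → (3 : ℤ) • x ∈ Λ := by
    intro k hk
    convert Λ.add_mem (Λ.sub_mem (Λ.zsmul_mem hyΛ 2) (Λ.zsmul_mem htΛ k)) hk using 1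
    module
  have hxxz : ∀ k : ℤ, (-2 : ℤ) • x + (1 : ℤ) • z + k • t ∈ Λ → (3 : ℤ) • x ∈ Λ := by
    intro k hk
    convert Λ.sub_mem (Λ.add_mem hyΛ (Λ.zsmul_mem htΛ k)) hk using 1
    module
  have h23 : (2 : ℤ) • x ∈ Λ → (3 : ℤ) • x ∈ Λ → False := by
    intro h2 h3
    refine hxΛ ?_
    convert Λ.sub_mem h3 h2 using 1
    module
  obtain ⟨k₁, hk₁⟩ : ∃ k : ℤ, (-1 : ℤ) • x + (1 : ℤ) • z + k • t ∈ latPts U := by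
    obtain ⟨w, hw, -, hpos⟩ := hint η (-x) (by simp [-zsmul_eq_mul, hηx])
    have := hw μ hz.1
    exact move w hw _ _ (by omega) (by omega) (by omega) (by omega)
  obtain ⟨k₂, hk₂⟩ : ∃ k : ℤ, (1 : ℤ) • x + (-1 : ℤ) • z + k • t ∈ latPts U := by
    obtain ⟨w, hw, -, hpos⟩ := hint μ (-z) (by simp [-zsmul_eq_mul, hμz])
    have := hw η hx.1
    exact move w hw _ _ (by omega) (by omega) (by omega) (by omega)
  obtain ⟨w, hw, -, hpos⟩ := hint (η + μ) (-(x + z)) (by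
    simp [-zsmul_eq_mul, hηx, hμx, hμz, hηz])
  rw [add_dotProduct] at hpos
  have hwη := hw η hx.1
  have hwμ := hw μ hz.1
  by_cases c1 : 0 ≤ η ⬝ᵥ w ∧ 0 ≤ μ ⬝ᵥ w
  · by_cases c2 : 0 < η ⬝ᵥ w
    · obtain ⟨k, hk⟩ := move w hw (-1) 0 (by omega) (by omega) (by omega) (by omega)
      exact hcx' k hk
    · obtain ⟨k, hk⟩ := move w hw 0 (-1) (by omega) (by omega) (by omega) (by omega)
      exact hcz' k hk
  · by_cases c2 : 0 ≤ η ⬝ᵥ w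
    · -- Here `(-2, 1, k)` and `(1, -1, k₂)` are in the polytope, and one of them is a root.
      obtain ⟨k, hk⟩ := move w hw (-2) 1 (by omega) (by omega) (by omega) (by omega)
      refine hcx' (k + k₂) ?_
      by_cases hΛ : (1 : ℤ) • x + (-1 : ℤ) • z + k₂ • t ∈ Λ
      · obtain ⟨ν, hν⟩ := exists_rootAt hA h0 hk (fun h => h23 (hxz' _ hΛ) (hxxz _ h))
        obtain rfl : ν = μ := by
          by_contra h
          have := hν.2.2 μ hz.1 (Ne.symm h)
          simp [-zsmul_eq_mul, hμx, hμz, hμt] at this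
        convert hν.add_mem hk₂ (by simp [-zsmul_eq_mul, hμx, hμz, hμt]) using 1
        module
      · obtain ⟨ν, hν⟩ := exists_rootAt hA h0 hk₂ hΛ
        obtain rfl : ν = η := by
          by_contra h
          have := hν.2.2 η hx.1 (Ne.symm h)
          simp [-zsmul_eq_mul, hηx, hηz, hηt] at this
        convert hν.add_mem hk (by simp [-zsmul_eq_mul, hηx, hηz, hηt]) using 1
        module
    · obtain ⟨k, hk⟩ := move w hw 1 (-2) (by omega) (by omega) (by omega) (by omega)
      refine hcz' (k + k₁) ?_
      by_cases hΛ : (-1 : ℤ) • x + (1 : ℤ) • z + k₁ • t ∈ Λ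
      · obtain ⟨ν, hν⟩ := exists_rootAt hA h0 hk (fun h => h23 (hxz _ hΛ) (hxzz _ h))
        obtain rfl : ν = η := by
          by_contra h
          have := hν.2.2 η hx.1 (Ne.symm h)
          simp [-zsmul_eq_mul, hηx, hηz, hηt] at this
        convert hν.add_mem hk₁ (by simp [-zsmul_eq_mul, hηx, hηz, hηt]) using 1
        module
      · obtain ⟨ν, hν⟩ := exists_rootAt hA h0 hk₁ hΛ
        obtain rfl : ν = μ := by
          by_contra h
          have := hν.2.2 μ hz.1 (Ne.symm h)
          simp [-zsmul_eq_mul, hμx, hμz, hμt] at this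
        convert hν.add_mem hk (by simp [-zsmul_eq_mul, hμx, hμz, hμt]) using 1
        module

/-! ### All the lattice points lie in `Λ` -/

open Matrix in
/-- Cramer's rule for three vectors. -/
lemma cramer_cross {R : Type*} [CommRing R] (a b c r : Fin 3 → R) :
    (c ⬝ᵥ (a ⨯₃ b)) • r =
      (a ⬝ᵥ r) • (b ⨯₃ c) + (b ⬝ᵥ r) • (c ⨯₃ a) + (c ⬝ᵥ r) • (a ⨯₃ b) := by
  funext i
  fin_cases i <;>
    simp only [cross_apply, vec3_dotProduct, Pi.add_apply, Pi.smul_apply, smul_eq_mul,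
      cons_val_zero, cons_val_one, cons_val, Fin.zero_eta, Fin.mk_one, Fin.reduceFinMk] <;>
    ring

open Matrix in
lemma eq_zero_of_dotProduct_eq_zero {a b c r : Fin 3 → ℤ} (h : c ⬝ᵥ (a ⨯₃ b) = 1)
    (ha : a ⬝ᵥ r = 0) (hb : b ⬝ᵥ r = 0) (hc : c ⬝ᵥ r = 0) : r = 0 := by
  have := cramer_cross a b c r
  rwa [h, ha, hb, hc, one_smul, zero_smul, zero_smul, zero_smul, add_zero, add_zero] at this

open Matrix in
/-- The combinatorial core: if `Λ` contains all the lattice points of the polytope at which two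
inequalities are tight (`hA`), and the polytope is bounded (`h0`), has the origin
in its interior (`hint`) and has lattice vertices (`hint`, `hvert`), then `Λ` contains all the
lattice points of the polytope. -/
lemma latPts_subset {U : Set (Fin 3 → ℤ)} {Λ : AddSubgroup (Fin 3 → ℤ)}
    (hA : ∀ x ∈ latPts U, ∀ u ∈ U, ∀ u' ∈ U, u ≠ u' → u ⬝ᵥ x = -1 → u' ⬝ᵥ x = -1 → x ∈ Λ)
    (h0 : ∀ x : Fin 3 → ℤ, (∀ u ∈ U, 0 ≤ u ⬝ᵥ x) → x = 0)
    (hint : ∀ g d : Fin 3 → ℤ, 0 < g ⬝ᵥ d → ∃ w ∈ latPts U, w ∈ Λ ∧ 0 < g ⬝ᵥ w)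
    (hvert : ∀ y ∈ latPts U, ∀ η ∈ U, ∀ μ ∈ U, η ⬝ᵥ y = -1 → μ ⬝ᵥ y = -1 →
      (∀ u ∈ U, u ⬝ᵥ y = -1 → u = η ∨ u = μ) → ∀ t c : Fin 3 → ℤ, η ⬝ᵥ t = 0 → μ ⬝ᵥ t = 0 →
      0 < c ⬝ᵥ t → ∃ v ∈ latPts U, η ⬝ᵥ v = -1 ∧ μ ⬝ᵥ v = -1 ∧ c ⬝ᵥ y < c ⬝ᵥ v ∧
        (∀ p ∈ latPts U, η ⬝ᵥ p = -1 → μ ⬝ᵥ p = -1 → c ⬝ᵥ p ≤ c ⬝ᵥ v) ∧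
        ∃ u ∈ U, u ⬝ᵥ v = -1 ∧ u ⬝ᵥ t ≠ 0) :
    ∀ x ∈ latPts U, x ∈ Λ := by
  intro x hxP
  by_contra hxΛ
  obtain ⟨η, hx⟩ := exists_rootAt hA h0 hxP hxΛ
  have hηx := hx.2.1
  -- A vertex `w` on the other side of the origin yields a facet parallel to `x`.
  obtain ⟨w, hw, hwΛ, hwpos⟩ := hint η (-x) (by simp [-zsmul_eq_mul, hηx])
  obtain ⟨μ, hμ⟩ := exists_rootAt hA h0 (hx.add_mem hw hwpos.le)
    (fun h => hxΛ (by simpa using Λ.sub_mem h hwΛ))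
  have hμw := hμ.2.1
  have hne : μ ≠ η := by
    rintro rfl
    rw [dotProduct_add] at hμw
    omega
  have hμx' := hx.2.2 μ hμ.1 hne
  have hμw' := hw μ hμ.1
  rw [dotProduct_add] at hμw
  have hμx0 : μ ⬝ᵥ x = 0 := by omega
  have hμw0 : μ ⬝ᵥ w = -1 := by omega
  set y := w + (η ⬝ᵥ w + 1) • x with hy
  have hyP : y ∈ latPts U := hx.add_smul_mem hw (by omega) le_rfl
  have hyxP : y - x ∈ latPts U := by
    convert hx.add_smul_mem hw (k := η ⬝ᵥ w) (by omega) (by omega) using 1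
    rw [hy]; module
  have hηy : η ⬝ᵥ y = -1 := by
    rw [hy, dotProduct_add, dotProduct_smul, hηx, smul_eq_mul]; ring
  have hμy : μ ⬝ᵥ y = -1 := by
    rw [hy, dotProduct_add, dotProduct_smul, hμx0, smul_zero]; omega
  obtain ⟨hyΛ, hzΛ, hz, -, hedge⟩ := hx.sub hA h0 hxΛ hyP hηy hμ.1 hne hμy hyxP
  clear_value y
  obtain ⟨z, hzy⟩ : ∃ z, z = y - x := ⟨_, rfl⟩
  rw [← hzy] at hzΛ hz
  obtain rfl : y = x + z := by rw [hzy]; abel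
  have hμz := hz.2.1
  have hηz : η ⬝ᵥ z = 0 := by rw [dotProduct_add] at hηy; omega
  -- The third basis vector is `η × μ`, and its coordinate functional is `x × z`.
  set t := η ⨯₃ μ with ht
  set c := x ⨯₃ z with hc
  have hηt : η ⬝ᵥ t = 0 := dot_self_cross η μ
  have hμt : μ ⬝ᵥ t = 0 := dot_cross_self η μ
  have hcx : c ⬝ᵥ x = 0 := by rw [dotProduct_comm]; exact dot_self_cross x z
  have hcz : c ⬝ᵥ z = 0 := by rw [dotProduct_comm]; exact dot_cross_self x z
  have hct : c ⬝ᵥ t = 1 := by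
    rw [hc, ht, cross_dot_cross, dotProduct_comm x η, dotProduct_comm z μ, dotProduct_comm x μ,
      hηx, hμz, hμx0]
    ring
  have hdec : ∀ p : Fin 3 → ℤ, p = (-(η ⬝ᵥ p)) • x + (-(μ ⬝ᵥ p)) • z + (c ⬝ᵥ p) • t := by
    intro p
    rw [← sub_eq_zero]
    refine eq_zero_of_dotProduct_eq_zero (ht ▸ hct) ?_ ?_ ?_ <;>
    simp only [dotProduct_sub, dotProduct_add, dotProduct_smul, hηx, hηz, hηt, hμx0, hμz, hμt,
      hcx, hcz, hct, smul_eq_mul] <;> ring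
  clear_value t c
  have end_point : ∀ t c : Fin 3 → ℤ, η ⬝ᵥ t = 0 → μ ⬝ᵥ t = 0 → c ⬝ᵥ x = 0 → c ⬝ᵥ z = 0 →
      c ⬝ᵥ t = 1 →
      (∀ p : Fin 3 → ℤ, p = (-(η ⬝ᵥ p)) • x + (-(μ ⬝ᵥ p)) • z + (c ⬝ᵥ p) • t) →
      ∃ T : ℤ, 0 < T ∧ x + z + T • t ∈ latPts U ∧ x + z + T • t ∈ Λ ∧
        (∀ k : ℤ, x + z + k • t ∈ latPts U → k ≤ T) ∧ z + T • t ∉ latPts U ∧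
        x + T • t ∉ latPts U := by
    intro t c hηt hμt hcx hcz hct hdec
    obtain ⟨v, hv, hηv, hμv, hcv, hmax, u, hu, huv, hut⟩ :=
      hvert _ hyP η hx.1 μ hz.1 hηy hμy hedge t c hηt hμt (by omega)
    have hvd := hdec v
    rw [hηv, hμv, neg_neg, one_smul, one_smul] at hvd
    rw [dotProduct_add, hcx, hcz, add_zero] at hcv
    have hthird : ¬ ∀ u ∈ U, u ⬝ᵥ v = -1 → u = η ∨ u = μ := by
      intro h
      rcases h u hu huv with rfl | rfl
      · exact hut hηt
      · exact hut hμt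
    refine ⟨c ⬝ᵥ v, hcv, hvd ▸ hv, hvd ▸ hA v hv η hx.1 μ hz.1 hne.symm hηv hμv, ?_, ?_, ?_⟩
    · intro k hk
      have := hmax _ hk (by simp [-zsmul_eq_mul, hηx, hηz, hηt])
        (by simp [-zsmul_eq_mul, hμx0, hμz, hμt])
      simpa [-zsmul_eq_mul, hcx, hcz, hct] using this
    · intro h
      refine hthird (hx.sub hA h0 hxΛ hv hηv hz.1 hne hμv ?_).2.2.2.2
      convert h using 1
      nth_rewrite 1 [hvd]; module
    · intro h
      refine hthird fun u hu huv => ((hz.sub hA h0 hzΛ hv hμv hx.1 hne.symm hηv ?_).2.2.2.2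
        u hu huv).symm
      convert h using 1
      nth_rewrite 1 [hvd]; module
  obtain ⟨T, hT, hvP, -, hmax, hfx, hfz⟩ := end_point t c hηt hμt hcx hcz hct hdec
  obtain ⟨T', hT', hvP', -, hmax', hfx', hfz'⟩ := end_point (-t) (-c) (by simpa) (by simpa)
    (by simpa) (by simpa) (by simpa) (by simpa using hdec)
  have htΛ : t ∈ Λ := by
    have h1 : x + z + t ∈ latPts U := by
      intro u hu
      have h1 := hyP u hu
      have h2 := hvP u hu
      simp only [dotProduct_add, dotProduct_smul, smul_eq_mul] at h1 h2 ⊢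
      rcases le_or_gt 0 (u ⬝ᵥ t) with h | h
      · omega
      · nlinarith
    have h2 := hA _ h1 η hx.1 μ hz.1 hne.symm (by rw [dotProduct_add]; omega)
      (by rw [dotProduct_add]; omega)
    simpa using Λ.sub_mem h2 hyΛ
  rcases exists_neg_add_mem hA h0 hint hx hxΛ hz hyΛ hηz hμx0 hηt hμt htΛ
    (fun p => ⟨_, hdec p⟩) with ⟨s, hs⟩ | ⟨s, hs⟩
  · exact neg_add_notMem hA h0 hx hxΛ hz hηz hμx0 hηt hμt htΛ hedge hT hvP hmax hfx
      hT' hvP' hmax' hfx' s hs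
  · rw [add_comm x z] at hvP hvP' hedge
    refine neg_add_notMem hA h0 hz hzΛ hx hμx0 hηz hμt hηt htΛ
      (fun u hu h => (hedge u hu h).symm) hT hvP ?_ hfz hT' hvP' ?_ hfz' s hs
    · rwa [add_comm x z] at hmax
    · rwa [add_comm x z] at hmax'

/-! ### Convex geometry of the polytope -/

/-- The inclusion of `ℤ³` into `ℝ³`. -/
def toReal : (Fin 3 → ℤ) →+ (Fin 3 → ℝ) := (Int.castAddHom ℝ).compLeft (Fin 3)

lemma toReal_apply (x : Fin 3 → ℤ) (i : Fin 3) : toReal x i = (x i : ℝ) := rfl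

lemma toReal_dot (u x : Fin 3 → ℤ) : toReal u ⬝ᵥ toReal x = ((u ⬝ᵥ x : ℤ) : ℝ) := by
  simp [dotProduct, toReal_apply]

lemma toReal_zsmul (k : ℤ) (x : Fin 3 → ℤ) : toReal (k • x) = (k : ℝ) • toReal x := by
  rw [map_zsmul, Int.cast_smul_eq_zsmul]

lemma toReal_injective : Function.Injective toReal := fun x y h => by
  funext i
  exact Int.cast_injective (congrFun h i)

lemma IsLatticePt.exists_toReal {x : Fin 3 → ℝ} (hx : IsLatticePt x) : ∃ m, toReal m = x := by
  choose m hm using hx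
  exact ⟨m, funext fun i => (hm i).symm⟩

lemma isLatticePt_toReal (m : Fin 3 → ℤ) : IsLatticePt (toReal m) := fun i => ⟨m i, rfl⟩

/-- The pairing with `g`, as a continuous linear functional. -/
noncomputable def dotL (g : Fin 3 → ℝ) : StrongDual ℝ (Fin 3 → ℝ) :=
  ∑ i, g i • ContinuousLinearMap.proj i

lemma dotL_apply (g x : Fin 3 → ℝ) : dotL g x = g ⬝ᵥ x := by
  simp [dotL, dotProduct]

/-- The polytope cut out by the inequalities `⟨u, x⟩ ≥ -1`, `u ∈ U`. -/
def hPoly (U : Set (Fin 3 → ℤ)) : Set (Fin 3 → ℝ) := {x | ∀ u ∈ U, -1 ≤ toReal u ⬝ᵥ x}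

lemma toReal_mem_hPoly {U : Set (Fin 3 → ℤ)} {x : Fin 3 → ℤ} :
    toReal x ∈ hPoly U ↔ x ∈ latPts U := by
  simp only [hPoly, latPts, Set.mem_ofPred_eq, toReal_dot]
  exact forall₂_congr fun u _ => by exact_mod_cast Iff.rfl

lemma toReal_dot_eq_neg_one {u x : Fin 3 → ℤ} : toReal u ⬝ᵥ toReal x = -1 ↔ u ⬝ᵥ x = -1 := by
  rw [toReal_dot]; exact_mod_cast Iff.rfl

/-- A reflexive polytope is cut out by finitely many inequalities with integral normals,
namely the ones of the vertices of the dual polytope. -/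
lemma exists_eq_hPoly {P : Set (Fin 3 → ℝ)} (hP : IsReflexive P) :
    ∃ U : Set (Fin 3 → ℤ), U.Finite ∧ P = hPoly U := by
  obtain ⟨⟨V, hV, -, hPV⟩, hint, W, hW, hWl, hPW⟩ := hP
  have hconv : Convex ℝ P := hPV ▸ convex_convexHull ℝ V
  have hclosed : IsClosed P := hPV ▸ hV.isClosed_convexHull ℝ
  refine ⟨toReal ⁻¹' W, hW.preimage toReal_injective.injOn, Set.Subset.antisymm ?_ ?_⟩
  · intro x hx u hu
    have h : toReal u ∈ dualPolytope P := by
      rw [hPW]; exact subset_convexHull ℝ W hu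
    have := h x hx
    rwa [show dotProd x (toReal u) = toReal u ⬝ᵥ x from dotProduct_comm _ _] at this
  · intro x hx
    by_contra hxP
    obtain ⟨f, s, hfx, hfP⟩ := geometric_hahn_banach_point_closed hconv hclosed hxP
    have hs : s < 0 := by simpa using hfP 0 (interior_subset hint)
    set g : Fin 3 → ℝ := fun i => f (fun j => if i = j then 1 else 0) with hg
    have hf : ∀ p, f p = p ⬝ᵥ g := fun p => f.toLinearMap.pi_apply_eq_sum_univ p
    have hy : (-s)⁻¹ • g ∈ dualPolytope P := by
      intro p hp
      change -1 ≤ p ⬝ᵥ _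
      rw [dotProduct_smul, ← hf, smul_eq_mul, inv_mul_eq_div, le_div_iff₀ (by linarith)]
      linarith [hfP p hp]
    rw [hPW] at hy
    have hsub : convexHull ℝ W ⊆ {y | -1 ≤ dotL x y} := by
      refine convexHull_min ?_ (convex_halfSpace_ge (dotL x).toLinearMap.isLinear _)
      intro w hw
      obtain ⟨u, rfl⟩ := (hWl w hw).exists_toReal
      have := hx u hw
      rwa [dotProduct_comm, ← dotL_apply] at this
    have h1 : -1 ≤ dotL x ((-s)⁻¹ • g) := hsub hy
    rw [dotL_apply, dotProduct_smul, ← hf, smul_eq_mul, inv_mul_eq_div,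
      le_div_iff₀ (by linarith)] at h1
    linarith

lemma IsLatticePolytope.isCompact {P : Set (Fin 3 → ℝ)} (hP : IsLatticePolytope P) :
    IsCompact P := by
  obtain ⟨V, hV, -, rfl⟩ := hP
  exact hV.isCompact_convexHull ℝ

lemma IsLatticePolytope.isLatticePt_of_mem_extremePoints {P : Set (Fin 3 → ℝ)}
    (hP : IsLatticePolytope P) {v : Fin 3 → ℝ} (hv : v ∈ P.extremePoints ℝ) : IsLatticePt v := by
  obtain ⟨V, hV, hVl, rfl⟩ := hP
  exact hVl v (extremePoints_convexHull_subset hv)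

lemma IsLatticePolytope.convexHull_extremePoints {P : Set (Fin 3 → ℝ)}
    (hP : IsLatticePolytope P) : convexHull ℝ (P.extremePoints ℝ) = P := by
  have hc := hP.isCompact
  obtain ⟨V, hV, hVl, rfl⟩ := hP
  have hfin : ((convexHull ℝ V).extremePoints ℝ).Finite :=
    hV.subset extremePoints_convexHull_subset
  rw [← (hfin.isClosed_convexHull ℝ).closure_eq]
  exact closure_convexHull_extremePoints hc (convex_convexHull ℝ V)

/-- A direction which is annihilated by all the tight inequalities at `p` can be followed for
a short while in both senses. -/
lemma exists_pos_add_smul_mem {U : Set (Fin 3 → ℤ)} (hU : U.Finite) {p d : Fin 3 → ℝ}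
    (hp : p ∈ hPoly U) (hd : ∀ u ∈ U, toReal u ⬝ᵥ p = -1 → toReal u ⬝ᵥ d = 0) :
    ∃ ε : ℝ, 0 < ε ∧ p + ε • d ∈ hPoly U ∧ p - ε • d ∈ hPoly U := by
  have key : ∀ d : Fin 3 → ℝ, (∀ u ∈ U, toReal u ⬝ᵥ p = -1 → toReal u ⬝ᵥ d = 0) →
      ∀ᶠ ε in nhds (0 : ℝ), p + ε • d ∈ hPoly U := by
    intro d hd
    have : ∀ u ∈ U, ∀ᶠ ε in nhds (0 : ℝ), -1 ≤ toReal u ⬝ᵥ (p + ε • d) := by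
      intro u hu
      simp only [dotProduct_add, dotProduct_smul, smul_eq_mul]
      by_cases h : toReal u ⬝ᵥ p = -1
      · rw [hd u hu h, h]; simp
      · have hlt : -1 < toReal u ⬝ᵥ p := lt_of_le_of_ne (hp u hu) (Ne.symm h)
        have hcont : Filter.Tendsto (fun ε : ℝ => toReal u ⬝ᵥ p + ε * toReal u ⬝ᵥ d)
            (nhds 0) (nhds (toReal u ⬝ᵥ p + 0 * toReal u ⬝ᵥ d)) :=
          Continuous.tendsto (by fun_prop) 0
        refine (hcont.eventually_const_lt (u := -1) (by simpa using hlt)).mono fun _ h => h.le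
    exact (hU.eventually_all).2 this
  have h1 := key d hd
  have h2 := key (-d) (fun u hu h => by rw [dotProduct_neg, hd u hu h, neg_zero])
  obtain ⟨ε, ⟨h1, h2⟩, h⟩ := (((h1.and h2).filter_mono nhdsWithin_le_nhds).and
    (self_mem_nhdsWithin (s := Set.Ioi (0 : ℝ)))).exists
  exact ⟨ε, h, h1, by simpa [sub_eq_add_neg] using h2⟩

/-- The tight inequalities at a vertex have full rank. -/
lemma exists_tight_of_mem_extremePoints {U : Set (Fin 3 → ℤ)} (hU : U.Finite) {v d : Fin 3 → ℝ}
    (hv : v ∈ (hPoly U).extremePoints ℝ) (hd : d ≠ 0) :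
    ∃ u ∈ U, toReal u ⬝ᵥ v = -1 ∧ toReal u ⬝ᵥ d ≠ 0 := by
  by_contra! h
  obtain ⟨ε, hε, h1, h2⟩ := exists_pos_add_smul_mem hU hv.1 h
  have := hv.2 h1 h2 ⟨1 / 2, 1 / 2, by norm_num, by norm_num, by norm_num, by module⟩
  simp [hε.ne', hd] at this

/-- The face of the polytope on which both `η` and `μ` are tight is exposed. -/
lemma mem_toExposed_iff {U : Set (Fin 3 → ℤ)} {η μ : Fin 3 → ℤ} (hη : η ∈ U) (hμ : μ ∈ U)
    {y : Fin 3 → ℝ} (hy : y ∈ hPoly U) (hηy : toReal η ⬝ᵥ y = -1) (hμy : toReal μ ⬝ᵥ y = -1)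
    {p : Fin 3 → ℝ} :
    p ∈ (dotL (-(toReal η + toReal μ))).toExposed (hPoly U) ↔
      p ∈ hPoly U ∧ toReal η ⬝ᵥ p = -1 ∧ toReal μ ⬝ᵥ p = -1 := by
  simp only [ContinuousLinearMap.toExposed, Set.mem_ofPred_eq, dotL_apply, neg_dotProduct,
    add_dotProduct]
  refine and_congr_right fun hp => ⟨fun h => ?_, fun h q hq => ?_⟩
  · have h1 := h y hy
    have h2 := hp η hη
    have h3 := hp μ hμ
    constructor <;> linarith
  · have h2 := hq η hη
    have h3 := hq μ hμ
    linarith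

open Matrix in
/-- A lattice point at which two different inequalities are tight lies in the `1`-skeleton. -/
lemma mem_skeletonLattice_of_tight {U : Set (Fin 3 → ℤ)} {η μ x : Fin 3 → ℤ} (hx : x ∈ latPts U)
    (hη : η ∈ U) (hμ : μ ∈ U) (hne : η ≠ μ) (hηx : η ⬝ᵥ x = -1) (hμx : μ ⬝ᵥ x = -1) :
    toReal x ∈ skeletonLattice (hPoly U) 1 := by
  rw [← toReal_dot_eq_neg_one] at hηx hμx
  have hxP := toReal_mem_hPoly.2 hx
  have hF := fun p => mem_toExposed_iff hη hμ hxP hηx hμx (p := p)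
  set F := (dotL (-(toReal η + toReal μ))).toExposed (hPoly U) with hFdef
  refine AddSubgroup.subset_closure ⟨isLatticePt_toReal x, F,
    ContinuousLinearMap.toExposed.isExposed, ?_, (hF _).2 ⟨hxP, hηx, hμx⟩⟩
  set t := toReal η ⨯₃ toReal μ with ht
  have ht0 : t ≠ 0 := by
    intro h0
    refine hne (toReal_injective ?_)
    have h1 : toReal x ⨯₃ t = 0 := by rw [h0]; simp
    rw [ht, cross_cross_eq_smul_sub_smul'] at h1
    rw [dotProduct_comm (toReal x), hηx, hμx] at h1
    have := sub_eq_zero.1 h1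
    simpa using this
  have htt : t ⬝ᵥ t ≠ 0 := by simpa [dotProduct_self_eq_zero] using ht0
  have hspan : vectorSpan ℝ F ≤ Submodule.span ℝ {t} := by
    rw [vectorSpan, Submodule.span_le]
    rintro _ ⟨p, hp, q, hq, rfl⟩
    obtain ⟨-, hp1, hp2⟩ := (hF p).1 hp
    obtain ⟨-, hq1, hq2⟩ := (hF q).1 hq
    have := cramer_cross (toReal η) (toReal μ) t (p - q)
    rw [← ht, dotProduct_sub, dotProduct_sub, hp1, hp2, hq1, hq2, sub_self, zero_smul, zero_smul,
      zero_add, zero_add] at this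
    refine Submodule.mem_span_singleton.2 ⟨(t ⬝ᵥ t)⁻¹ * (t ⬝ᵥ (p - q)), ?_⟩
    rw [mul_smul, ← this, smul_smul, inv_mul_cancel₀ htt, one_smul]; rfl
  calc Module.finrank ℝ (vectorSpan ℝ F) ≤ Module.finrank ℝ (Submodule.span ℝ {t}) :=
        Submodule.finrank_mono hspan
    _ = 1 := finrank_span_singleton ht0

lemma exists_int_ne_zero_dot_eq_zero (a : Fin 3 → ℤ) : ∃ d : Fin 3 → ℤ, d ≠ 0 ∧ a ⬝ᵥ d = 0 := by
  by_cases h : a 0 = 0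
  · exact ⟨![1, 0, 0], by simp, by simp [dotProduct, Fin.sum_univ_three, h]⟩
  · refine ⟨![-a 1, a 0, 0], fun h' => h (by simpa using congrFun h' 1), ?_⟩
    simp [dotProduct, Fin.sum_univ_three]; ring

/-! ### Generation of `ℤ³` by the lattice points -/

/-- The lattice points of the polytope generate `ℤ³`: a point `m` lies in the cone over at most
three affinely independent vertices of a common facet, and the lattice points of the half-open
parallelepiped spanned by these have height `0`, `1` or `2` over the facet. -/
lemma mem_of_latPts_subset {U : Set (Fin 3 → ℤ)} (hU : U.Finite)
    (h0 : ∀ x : Fin 3 → ℤ, (∀ u ∈ U, 0 ≤ u ⬝ᵥ x) → x = 0)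
    {V : Set (Fin 3 → ℝ)} (hV : ∀ v ∈ V, IsLatticePt v) (hUV : convexHull ℝ V = hPoly U)
    {Λ : AddSubgroup (Fin 3 → ℤ)} (hΛ : ∀ x ∈ latPts U, x ∈ Λ) (m : Fin 3 → ℤ) : m ∈ Λ := by
  by_cases hm : m = 0
  · exact hm ▸ Λ.zero_mem
  obtain ⟨u₁, hu₁, hneg⟩ : ∃ u ∈ U, u ⬝ᵥ m < 0 := by
    by_contra! h
    exact hm (h0 m h)
  obtain ⟨η, hη, hmin⟩ := hU.exists_minimalFor (fun u => u ⬝ᵥ m) _ ⟨u₁, hu₁⟩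
  replace hmin : ∀ u ∈ U, η ⬝ᵥ m ≤ u ⬝ᵥ m := fun u hu => by
    rcases le_total (η ⬝ᵥ m) (u ⬝ᵥ m) with h | h
    · exact h
    · exact hmin hu h
  have hηm : η ⬝ᵥ m < 0 := (hmin u₁ hu₁).trans_lt hneg
  set h : ℝ := -((η ⬝ᵥ m : ℤ) : ℝ) with hh
  have hpos : 0 < h := by
    have : ((η ⬝ᵥ m : ℤ) : ℝ) < 0 := by exact_mod_cast hηm
    linarith
  have hmem : h⁻¹ • toReal m ∈ convexHull ℝ V := by
    rw [hUV]
    intro u hu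
    rw [dotProduct_smul, toReal_dot, smul_eq_mul, inv_mul_eq_div, le_div_iff₀ hpos]
    have : ((η ⬝ᵥ m : ℤ) : ℝ) ≤ ((u ⬝ᵥ m : ℤ) : ℝ) := by exact_mod_cast hmin u hu
    linarith
  obtain ⟨ι, _, q, w, hq, haff, hw, hw1, hsum⟩ := eq_pos_convex_span_of_mem_convexHull hmem
  have hq' : ∀ i, ∃ n, toReal n = q i := fun i => (hV _ (hq ⟨i, rfl⟩)).exists_toReal
  choose n hn using hq'
  have hnP : ∀ i, n i ∈ latPts U := fun i => by
    rw [← toReal_mem_hPoly, hn, ← hUV]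
    exact subset_convexHull ℝ V (hq ⟨i, rfl⟩)
  have hηn : ∀ i, toReal η ⬝ᵥ q i = -1 := by
    have hge : ∀ i, 0 ≤ w i * (toReal η ⬝ᵥ q i + 1) := fun i => by
      refine mul_nonneg (hw i).le ?_
      have := toReal_mem_hPoly.2 (hnP i) η hη
      rw [hn] at this
      linarith
    have hs : ∑ i, w i * (toReal η ⬝ᵥ q i + 1) = 0 := by
      have h1 : toReal η ⬝ᵥ (∑ i, w i • q i) = -1 := by
        rw [hsum, dotProduct_smul, toReal_dot, smul_eq_mul, inv_mul_eq_div, div_eq_iff hpos.ne']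
        linarith
      rw [dotProduct_sum] at h1
      simp only [dotProduct_smul, smul_eq_mul] at h1
      simp only [mul_add, mul_one, Finset.sum_add_distrib, h1, hw1]
      norm_num
    intro i
    have := (Finset.sum_eq_zero_iff_of_nonneg (fun i _ => hge i)).1 hs i (Finset.mem_univ i)
    rcases mul_eq_zero.1 this with h | h
    · exact absurd h (hw i).ne'
    · linarith
  have hcard : Fintype.card ι ≤ 3 := by
    have hne : Nonempty ι := by
      by_contra hemp
      rw [not_nonempty_iff] at hemp
      simp at hw1
    have h1 := haff.card_le_finrank_succ
    have h2 : vectorSpan ℝ (Set.range q) ≤ LinearMap.ker (dotL (toReal η)).toLinearMap := by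
      rw [vectorSpan, Submodule.span_le]
      rintro _ ⟨_, ⟨i, rfl⟩, _, ⟨j, rfl⟩, rfl⟩
      simp [dotL_apply, dotProduct_sub, hηn]
    have h3 : LinearMap.ker (dotL (toReal η)).toLinearMap ≠ ⊤ := by
      intro htop
      have : q hne.some ∈ LinearMap.ker (dotL (toReal η)).toLinearMap := htop ▸ Submodule.mem_top
      simp [dotL_apply, hηn] at this
    have h4 := Submodule.finrank_lt h3
    have h5 := Submodule.finrank_mono h2
    simp at h4
    omega
  set f : ι → ℝ := fun i => Int.fract (h * w i) with hf
  have hm_eq : toReal m = ∑ i, (h * w i) • q i := by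
    simp only [mul_smul]
    rw [← Finset.smul_sum, hsum, smul_smul, mul_inv_cancel₀ hpos.ne', one_smul]
  -- It is enough to deal with the representative of `m` in the half-open parallelepiped.
  set m' := m - ∑ i, ⌊h * w i⌋ • n i with hm'
  suffices hm'Λ : m' ∈ Λ by
    have := Λ.add_mem hm'Λ (Λ.sum_mem (t := Finset.univ)
      fun i _ => Λ.zsmul_mem (hΛ _ (hnP i)) ⌊h * w i⌋)
    simpa [hm'] using this
  have hm'_eq : toReal m' = ∑ i, f i • q i := by
    rw [hm', map_sub, hm_eq, map_sum, ← Finset.sum_sub_distrib]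
    refine Finset.sum_congr rfl fun i _ => ?_
    rw [toReal_zsmul, hn, ← sub_smul]; rfl
  have hmemP : ∀ g : ι → ℝ, (∀ i, 0 ≤ g i) → ∑ i, g i = 1 → ∀ r, toReal r = ∑ i, g i • q i →
      r ∈ Λ := by
    intro g hg hg1 r hr
    refine hΛ r (toReal_mem_hPoly.1 ?_)
    rw [hr, ← hUV]
    exact (convex_convexHull ℝ V).sum_mem (fun i _ => hg i) hg1
      fun i _ => subset_convexHull ℝ V (hq ⟨i, rfl⟩)
  have hf0 : ∀ i, 0 ≤ f i := fun i => Int.fract_nonneg _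
  have hf1 : ∀ i, f i < 1 := fun i => Int.fract_lt_one _
  have hheight : ∑ i, f i = ((-(η ⬝ᵥ m') : ℤ) : ℝ) := by
    rw [Int.cast_neg, ← toReal_dot, hm'_eq, dotProduct_sum]
    simp [dotProduct_smul, hηn]
  generalize -(η ⬝ᵥ m') = k at hheight
  have hk0 : 0 ≤ k := by
    have : (0 : ℝ) ≤ k := hheight ▸ Finset.sum_nonneg fun i _ => hf0 i
    exact_mod_cast this
  rcases hk0.eq_or_lt with rfl | hk0
  · rw [Int.cast_zero] at hheight
    have hz := (Finset.sum_eq_zero_iff_of_nonneg (fun i _ => hf0 i)).1 hheight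
    have : toReal m' = toReal 0 := by
      rw [hm'_eq, map_zero]
      exact Finset.sum_eq_zero fun i hi => by rw [hz i hi, zero_smul]
    rw [toReal_injective this]
    exact Λ.zero_mem
  · have hkc : k < Fintype.card ι := by
      have hne : (Finset.univ : Finset ι).Nonempty := by
        by_contra hemp
        rw [Finset.not_nonempty_iff_eq_empty] at hemp
        rw [hemp, Finset.sum_empty] at hheight
        have : (0 : ℤ) = k := by exact_mod_cast hheight
        omega
      have := Finset.sum_lt_sum_of_nonempty hne (fun i _ => hf1 i)
      rw [hheight] at this
      simp at this
      exact_mod_cast this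
    obtain rfl | ⟨rfl, hc⟩ : k = 1 ∨ k = 2 ∧ Fintype.card ι = 3 := by omega
    · exact hmemP f hf0 (by simpa using hheight) m' hm'_eq
    · -- The point symmetric to `m'` in the parallelepiped has height `1`.
      have := hmemP (fun i => 1 - f i) (fun i => by linarith [hf1 i])
        (by simp [hheight, hc]; norm_num) (∑ i, n i - m') (by
          simp only [sub_smul, one_smul, Finset.sum_sub_distrib, map_sub, map_sum, hn, hm'_eq])
      have h2 := Λ.sub_mem (Λ.sum_mem (t := Finset.univ) fun i _ => hΛ _ (hnP i)) this
      simpa using h2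

/-! ### The lattice generated by the `1`-skeleton -/

/-- For a `3`-dimensional reflexive polytope `P ⊆ ℝ³`, the lattice points on the
`1`-skeleton of `P` (edges and vertices) generate the full lattice `ℤ³`: `Λ₁ = ℤ³`. -/
theorem reflexive_threefold_one_skeleton_generates (P : Set (Fin 3 → ℝ))
    (hP : IsReflexive P) :
    skeletonLattice P 1 = latticeSubgroup 3 := by
  obtain ⟨U, hU, rfl⟩ := exists_eq_hPoly hP
  obtain ⟨hlat, hint0, -⟩ := hP
  have hcomp := hlat.isCompact
  have hhull := hlat.convexHull_extremePoints
  have hext := fun v hv => hlat.isLatticePt_of_mem_extremePoints (v := v) hv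
  set Λ := (skeletonLattice (hPoly U) 1).comap toReal with hΛ
  have hA : ∀ x ∈ latPts U, ∀ u ∈ U, ∀ u' ∈ U, u ≠ u' → u ⬝ᵥ x = -1 → u' ⬝ᵥ x = -1 → x ∈ Λ :=
    fun x hx u hu u' hu' hne h1 h2 => mem_skeletonLattice_of_tight hx hu hu' hne h1 h2
  have h0 : ∀ x : Fin 3 → ℤ, (∀ u ∈ U, 0 ≤ u ⬝ᵥ x) → x = 0 := by
    intro x hx
    by_contra hx0
    obtain ⟨C, hC⟩ := hcomp.isBounded.exists_norm_le
    have hnorm : 0 < ‖toReal x‖ := by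
      rw [norm_pos_iff]
      exact fun h => hx0 (toReal_injective (h.trans (map_zero _).symm))
    obtain ⟨k, hk⟩ := exists_nat_gt (C / ‖toReal x‖)
    have := hC ((k : ℝ) • toReal x) (fun u hu => by
      rw [dotProduct_smul, toReal_dot, smul_eq_mul]
      have h1 : (0 : ℝ) ≤ ((u ⬝ᵥ x : ℤ) : ℝ) := by exact_mod_cast hx u hu
      have := mul_nonneg (Nat.cast_nonneg (α := ℝ) k) h1
      linarith)
    rw [norm_smul, Real.norm_natCast] at this
    rw [div_lt_iff₀ hnorm] at hk
    linarith
  have hextΛ : ∀ v, toReal v ∈ (hPoly U).extremePoints ℝ → v ∈ Λ := by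
    intro v hv
    by_contra hvΛ
    obtain ⟨η, hη⟩ := exists_rootAt hA h0 (toReal_mem_hPoly.1 hv.1) hvΛ
    obtain ⟨d, hd, hηd⟩ := exists_int_ne_zero_dot_eq_zero η
    obtain ⟨u, hu, huv, hud⟩ := exists_tight_of_mem_extremePoints hU hv (d := toReal d)
      (fun h => hd (toReal_injective (h.trans (map_zero _).symm)))
    rw [toReal_dot_eq_neg_one] at huv
    obtain rfl : u = η := by
      by_contra hne
      have := hη.2.2 u hu hne
      omega
    exact hud (by rw [toReal_dot, hηd, Int.cast_zero])
  have hint : ∀ g d : Fin 3 → ℤ, 0 < g ⬝ᵥ d → ∃ w ∈ latPts U, w ∈ Λ ∧ 0 < g ⬝ᵥ w := by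
    intro g d hgd
    by_contra! hcon
    have hsub : hPoly U ⊆ {p | dotL (toReal g) p ≤ 0} := by
      rw [← hhull]
      refine convexHull_min ?_ (convex_halfSpace_le (dotL (toReal g)).toLinearMap.isLinear _)
      intro v hv
      obtain ⟨w, rfl⟩ := (hext v hv).exists_toReal
      have := hcon w (toReal_mem_hPoly.1 hv.1) (hextΛ w hv)
      rw [Set.mem_ofPred_eq, dotL_apply, toReal_dot]
      exact_mod_cast this
    have hev : ∀ᶠ ε in nhds (0 : ℝ), ε • toReal d ∈ hPoly U := by
      have hcont : Filter.Tendsto (fun ε : ℝ => ε • toReal d) (nhds 0) (nhds 0) := by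
        have : Continuous fun ε : ℝ => ε • toReal d := by fun_prop
        simpa using this.tendsto 0
      exact hcont (mem_interior_iff_mem_nhds.1 hint0)
    obtain ⟨ε, hε, hpos⟩ := ((hev.filter_mono nhdsWithin_le_nhds).and
      (self_mem_nhdsWithin (s := Set.Ioi (0 : ℝ)))).exists
    have h1 : dotL (toReal g) (ε • toReal d) ≤ 0 := hsub hε
    rw [dotL_apply, dotProduct_smul, toReal_dot, smul_eq_mul] at h1
    have h2 : (0 : ℝ) < ((g ⬝ᵥ d : ℤ) : ℝ) := by exact_mod_cast hgd
    have := mul_pos (Set.mem_Ioi.1 hpos) h2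
    linarith
  have hvert : ∀ y ∈ latPts U, ∀ η ∈ U, ∀ μ ∈ U, η ⬝ᵥ y = -1 → μ ⬝ᵥ y = -1 →
      (∀ u ∈ U, u ⬝ᵥ y = -1 → u = η ∨ u = μ) → ∀ t c : Fin 3 → ℤ, η ⬝ᵥ t = 0 → μ ⬝ᵥ t = 0 →
      0 < c ⬝ᵥ t → ∃ v ∈ latPts U, η ⬝ᵥ v = -1 ∧ μ ⬝ᵥ v = -1 ∧ c ⬝ᵥ y < c ⬝ᵥ v ∧
        (∀ p ∈ latPts U, η ⬝ᵥ p = -1 → μ ⬝ᵥ p = -1 → c ⬝ᵥ p ≤ c ⬝ᵥ v) ∧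
        ∃ u ∈ U, u ⬝ᵥ v = -1 ∧ u ⬝ᵥ t ≠ 0 := by
    intro y hy η hη μ hμ hηy hμy honly t c hηt hμt hct
    have hyP := toReal_mem_hPoly.2 hy
    have hF := fun p => mem_toExposed_iff hη hμ hyP (toReal_dot_eq_neg_one.2 hηy)
      (toReal_dot_eq_neg_one.2 hμy) (p := p)
    have hFexp : IsExposed ℝ (hPoly U) ((dotL (-(toReal η + toReal μ))).toExposed (hPoly U)) :=
      ContinuousLinearMap.toExposed.isExposed
    set F := (dotL (-(toReal η + toReal μ))).toExposed (hPoly U)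
    have hFcomp : IsCompact F := hFexp.isCompact hcomp
    -- The end of the edge `F` in the direction of `t`.
    have hKexp : IsExposed ℝ F ((dotL (toReal c)).toExposed F) :=
      ContinuousLinearMap.toExposed.isExposed
    have hKne : ((dotL (toReal c)).toExposed F).Nonempty := by
      obtain ⟨v, hv, hmax⟩ := hFcomp.exists_isMaxOn
        ⟨toReal y, (hF _).2 ⟨hyP, toReal_dot_eq_neg_one.2 hηy, toReal_dot_eq_neg_one.2 hμy⟩⟩
        (dotL (toReal c)).continuous.continuousOn
      exact ⟨v, hv, fun q hq => hmax hq⟩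
    obtain ⟨v, hv⟩ := (hKexp.isCompact hFcomp).extremePoints_nonempty hKne
    obtain ⟨hvF, hvmax⟩ := hv.1
    have hvext : v ∈ (hPoly U).extremePoints ℝ :=
      (hFexp.isExtreme.trans hKexp.isExtreme).extremePoints_subset_extremePoints hv
    obtain ⟨v, rfl⟩ := (hext v hvext).exists_toReal
    obtain ⟨hvP, hηv, hμv⟩ := (hF _).1 hvF
    simp only [dotL_apply] at hvmax
    refine ⟨v, toReal_mem_hPoly.1 hvP, toReal_dot_eq_neg_one.1 hηv, toReal_dot_eq_neg_one.1 hμv,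
      ?_, ?_, ?_⟩
    · obtain ⟨ε, hε, hmem, -⟩ := exists_pos_add_smul_mem hU hyP (d := toReal t) (by
        intro u hu huy
        rcases honly u hu (toReal_dot_eq_neg_one.1 huy) with rfl | rfl
        · rw [toReal_dot, hηt, Int.cast_zero]
        · rw [toReal_dot, hμt, Int.cast_zero])
      have := hvmax _ ((hF _).2 ⟨hmem, by
        rw [dotProduct_add, dotProduct_smul, toReal_dot, toReal_dot, hηt, hηy]; simp, by
        rw [dotProduct_add, dotProduct_smul, toReal_dot, toReal_dot, hμt, hμy]; simp⟩)
      rw [dotProduct_add, dotProduct_smul, toReal_dot, toReal_dot, toReal_dot, smul_eq_mul] at this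
      have h2 : (0 : ℝ) < ((c ⬝ᵥ t : ℤ) : ℝ) := by exact_mod_cast hct
      have h3 := mul_pos hε h2
      have h4 : ((c ⬝ᵥ y : ℤ) : ℝ) < ((c ⬝ᵥ v : ℤ) : ℝ) := by linarith
      exact_mod_cast h4
    · intro p hp hηp hμp
      have := hvmax _ ((hF _).2 ⟨toReal_mem_hPoly.2 hp, toReal_dot_eq_neg_one.2 hηp,
        toReal_dot_eq_neg_one.2 hμp⟩)
      rw [toReal_dot, toReal_dot] at this
      exact_mod_cast this
    · obtain ⟨u, hu, huv, hut⟩ := exists_tight_of_mem_extremePoints hU hvext (d := toReal t) (by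
        intro h
        have ht : t = 0 := toReal_injective (h.trans (map_zero _).symm)
        rw [ht, dotProduct_zero] at hct
        exact lt_irrefl _ hct)
      refine ⟨u, hu, toReal_dot_eq_neg_one.1 huv, fun h => hut ?_⟩
      rw [toReal_dot, h, Int.cast_zero]
  have hall := mem_of_latPts_subset hU h0 hext hhull (latPts_subset hA h0 hint hvert)
  refine le_antisymm (AddSubgroup.closure_mono fun x hx => hx.1) ?_
  rw [latticeSubgroup, AddSubgroup.closure_le]
  intro x hx
  obtain ⟨m, rfl⟩ := hx.exists_toReal
  exact hall m
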